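/- Let K be a local class of finite Σ-structures with Fraïssé limit R, and let μ_∞ be the frame-wise uniform measure on K^∞. Then μ_∞({S ∈ K^∞ : S ≅ R}) = 1; that is, under the frame-wise uniform measure almost every structure in K^∞ is isomorphic to the Fraïssé limit of K. -/

import Mathlib

open FirstOrder FirstOrder.Language

universe u v

/-- A finite structure for a relational signature `L`, with underlying set a finite subset of `ℕ`,
given by its relation interpretations (sets of tuples of natural numbers). -/
structure FinStruc (L : FirstOrder.Language.{u, v}) where
  carrier : Finset ℕ
  rel : ∀ ⦃n : ℕ⦄, L.Relations n → Set (Fin n → ℕ)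
  rel_mem : ∀ ⦃n : ℕ⦄ (R : L.Relations n) (t : Fin n → ℕ), t ∈ rel R → ∀ i, t i ∈ carrier

variable {L : FirstOrder.Language.{u, v}}

/-- The first-order structure on the underlying set of a `FinStruc`. -/
instance FinStruc.str [L.IsRelational] (A : FinStruc L) :
    L.Structure {x : ℕ // x ∈ A.carrier} where
  funMap := fun f _ => isEmptyElim f
  RelMap := fun {n} R t => (fun i => (t i : ℕ)) ∈ A.rel R

/-- Satisfaction of a sentence in a `FinStruc`. -/
def FinStruc.Sat [L.IsRelational] (A : FinStruc L) (φ : L.Sentence) : Prop :=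
  {x : ℕ // x ∈ A.carrier} ⊨ φ

/-- The General Irreflexivity axiom for a relation symbol `R` and coordinates `i`, `j`:
`∀ x₁ … xₙ, R (x₁, …, xₙ) → ¬ (xᵢ = xⱼ)`. -/
def giSentence {n : ℕ} (R : L.Relations n) (i j : Fin n) : L.Sentence :=
  BoundedFormula.alls
    ((Relations.boundedFormula R fun k => Term.var (Sum.inr k)).imp
      (Term.bdEqual (Term.var (Sum.inr i)) (Term.var (Sum.inr j))).not)

/-- The General Irreflexivity axiom schema `Φ^Σ_GI`. -/
def GITheory (L : FirstOrder.Language.{u, v}) : L.Theory :=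
  { φ | ∃ (n : ℕ) (R : L.Relations n) (i j : Fin n), i ≠ j ∧ φ = giSentence R i j }

/-- A sentence is local if it has the form `∀ x₁ … xₘ, R (x₁, …, xₘ) → ψ` with `m > 0` and
`ψ` quantifier-free. -/
def IsLocalSentence (φ : L.Sentence) : Prop :=
  ∃ m : ℕ, 0 < m ∧ ∃ (R : L.Relations m) (ψ : L.BoundedFormula Empty m), ψ.IsQF ∧
    φ = BoundedFormula.alls ((Relations.boundedFormula R fun k => Term.var (Sum.inr k)).imp ψ)

/-- A class of finite structures is local if it is the class of models of a set of local
sentences containing the General Irreflexivity axioms. -/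
def IsLocalClass [L.IsRelational] (K : Set (FinStruc L)) : Prop :=
  ∃ Φ : L.Theory, (∀ φ ∈ Φ, IsLocalSentence φ) ∧ GITheory L ⊆ Φ ∧
    K = { A : FinStruc L | ∀ φ ∈ Φ, A.Sat φ }

/-- The `n`-frame of a structure: same underlying set, same interpretations of relation symbols
of arity at most `n`, empty interpretation of all higher-arity relation symbols. -/
def FinStruc.frame (A : FinStruc L) (n : ℕ) : FinStruc L where
  carrier := A.carrier
  rel := fun m R => if m ≤ n then A.rel R else ∅
  rel_mem := by
    intro m R t ht i
    by_cases h : m ≤ n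
    · exact A.rel_mem R t (by simpa [h] using ht) i
    · simp [h] at ht

/-- The induced substructure of `B` on a finite set `X`. -/
def FinStruc.restrict (B : FinStruc L) (X : Finset ℕ) : FinStruc L where
  carrier := B.carrier ∩ X
  rel := fun _ R => { t | t ∈ B.rel R ∧ ∀ i, t i ∈ X }
  rel_mem := fun _ R t ht i => Finset.mem_inter.2 ⟨B.rel_mem R t ht.1 i, ht.2 i⟩

/-- `A` is the induced substructure of `B` on the subset `A.carrier` of `B.carrier`. -/
def FinStruc.IsInducedSub (A B : FinStruc L) : Prop :=
  A.carrier ⊆ B.carrier ∧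
    ∀ ⦃n : ℕ⦄ (R : L.Relations n) (t : Fin n → ℕ),
      (∀ i, t i ∈ A.carrier) → (t ∈ A.rel R ↔ t ∈ B.rel R)

/-- `A` is isomorphic to `B`: there is a bijection of the underlying sets preserving all
relations in both directions. -/
def FinStruc.IsIsoTo (A B : FinStruc L) : Prop :=
  ∃ f : ℕ → ℕ, Set.BijOn f ↑A.carrier ↑B.carrier ∧
    ∀ ⦃n : ℕ⦄ (R : L.Relations n) (t : Fin n → ℕ), (∀ i, t i ∈ A.carrier) →
      (t ∈ A.rel R ↔ (fun i => f (t i)) ∈ B.rel R)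

/-- The Adoptive Property. -/
def AdoptiveProperty (K : Set (FinStruc L)) : Prop :=
  ∀ (n : ℕ) (B A A' : FinStruc L), B ∈ K → A ∈ K → A' ∈ K →
    A.IsInducedSub B → A.carrier.card = n → A'.carrier = A.carrier →
    A'.frame (n - 1) = A.frame (n - 1) →
    ∃ B' ∈ K, B'.carrier = B.carrier ∧ B'.frame (n - 1) = B.frame (n - 1) ∧
      ∀ R : L.Relations n,
        B'.rel R = (B.rel R \ { t | ∀ i, t i ∈ A.carrier }) ∪ A'.rel R

/-- A structure for `L` with underlying set `ℕ`, given by its relation interpretations. -/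
structure InfStruc (L : FirstOrder.Language.{u, v}) where
  rel : ∀ ⦃n : ℕ⦄, L.Relations n → Set (Fin n → ℕ)

/-- The first-order structure on `ℕ` determined by an `InfStruc`. -/
def InfStruc.str [L.IsRelational] (M : InfStruc L) : L.Structure ℕ where
  funMap := fun f _ => isEmptyElim f
  RelMap := fun {n} R t => t ∈ M.rel R

/-- Satisfaction of a sentence in an `InfStruc`. -/
def InfStruc.Sat [L.IsRelational] (M : InfStruc L) (φ : L.Sentence) : Prop :=
  @FirstOrder.Language.Sentence.Realize L ℕ M.str φ

/-- The induced finite substructure of an `InfStruc` on a finite set `X`. -/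
def InfStruc.restrict (M : InfStruc L) (X : Finset ℕ) : FinStruc L where
  carrier := X
  rel := fun _ R => { t | t ∈ M.rel R ∧ ∀ i, t i ∈ X }
  rel_mem := fun _ _ _ ht i => ht.2 i

/-- The bundled structures isomorphic to a member of `K`. -/
def toBundled (L : FirstOrder.Language.{u, v}) [L.IsRelational] (K : Set (FinStruc L)) :
    Set (CategoryTheory.Bundled.{0} L.Structure) :=
  { M | ∃ A ∈ K, Nonempty (M ≃[L] {x : ℕ // x ∈ A.carrier}) }

/-- `K^{X,l}_{A,k}`: the set of `l`-frames of members `B` of `K` with underlying set `X` whose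
`k`-frame restricted to the underlying set of `A` is the `k`-frame of `A`. -/
def KsetFr (K : Set (FinStruc L)) (X : Finset ℕ) (l : ℕ) (A : FinStruc L) (k : ℕ) :
    Set (FinStruc L) :=
  { F | ∃ B ∈ K, B.carrier = X ∧ (B.frame k).restrict A.carrier = A.frame k ∧ F = B.frame l }

/-- `N(S,k)`: the number of distinct `(k+1)`-frames of members of `K` on the underlying set of `S`
whose `k`-frame is the `k`-frame of `S`. -/
noncomputable def Ncount (K : Set (FinStruc L)) (S : FinStruc L) (k : ℕ) : ℕ :=
  (KsetFr K S.carrier (k + 1) S k).ncard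

/-- The basic event `O_∞(A,k)`: structures on `ℕ` whose induced substructure on the underlying
set of `A` has `k`-frame equal to the `k`-frame of `A`. -/
def Oinf (A : FinStruc L) (k : ℕ) : Set (InfStruc L) :=
  { M | (M.restrict A.carrier).frame k = A.frame k }

/-- The σ-algebra on structures with underlying set `ℕ` generated by the basic frame events. -/
def frameEvents (L : FirstOrder.Language.{u, v}) : MeasurableSpace (InfStruc L) :=
  MeasurableSpace.generateFrom { s | ∃ (A : FinStruc L) (k : ℕ), s = Oinf A k }

/-- `K^∞`: the set of structures with underlying set `ℕ` satisfying all axioms in `Φ`. -/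
def KinfSet [L.IsRelational] (Φ : L.Theory) : Set (InfStruc L) :=
  { M | ∀ φ ∈ Φ, M.Sat φ }

/-
Every axiom of a local theory is guarded by an atom, and General Irreflexivity makes the entries of
a true atom distinct. A model on `ℕ` is therefore a set of ground atoms, each with a finite support,
and whether such a set is a model is decided one support at a time; in particular models that agree
on the common supports of two finite families closed under subsets can be amalgamated over them.

The frame-wise uniform measure chooses the atoms support by support, uniformly among the choices
allowed by the smaller supports. The number of choices on a set is bounded in terms of its size, so
a fresh point realizes a prescribed one-point extension of a finite substructure with probability
bounded below, conditionally on the failure of any number of earlier candidates. Almost every model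
thus has all one-point extensions, which makes it ultrahomogeneous with age `K`.
-/

open MeasureTheory
open scoped Pointwise ENNReal

section LocalSentences

variable {M N : Type*} [L.Structure M] [L.Structure N]

theorem exists_eq_var [L.IsRelational] {m : ℕ} (t : L.Term (Empty ⊕ Fin m)) :
    ∃ i, t = Term.var (Sum.inr i) := by
  cases t with
  | var a =>
    rcases a with e | i
    · exact e.elim
    · exact ⟨i, rfl⟩
  | func f _ => exact isEmptyElim f

/-- Two tuples, possibly in different structures, have the same atomic type: they satisfy the same
equalities and the same relations. -/
structure SameAtomicType (L : FirstOrder.Language.{u, v}) {M N : Type*} [L.Structure M]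
    [L.Structure N] {m : ℕ} (xs : Fin m → M) (ys : Fin m → N) : Prop where
  eq_iff : ∀ i j, xs i = xs j ↔ ys i = ys j
  relMap_iff : ∀ {n : ℕ} (R : L.Relations n) (s : Fin n → Fin m),
    Structure.RelMap R (xs ∘ s) ↔ Structure.RelMap R (ys ∘ s)

theorem SameAtomicType.realize_iff_of_isQF [L.IsRelational] {m : ℕ} {xs : Fin m → M}
    {ys : Fin m → N} (h : SameAtomicType L xs ys) {ψ : L.BoundedFormula Empty m} (hψ : ψ.IsQF) :
    ψ.Realize default xs ↔ ψ.Realize default ys := by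
  induction hψ with
  | falsum => exact Iff.rfl
  | imp _ _ ih₁ ih₂ => simp only [BoundedFormula.realize_imp, ih₁, ih₂]
  | of_isAtomic hat =>
    cases hat with
    | equal t₁ t₂ =>
      obtain ⟨i, rfl⟩ := exists_eq_var t₁
      obtain ⟨j, rfl⟩ := exists_eq_var t₂
      simpa using h.eq_iff i j
    | rel R ts =>
      choose s hs using fun i => exists_eq_var (ts i)
      obtain rfl : ts = fun i => Term.var (Sum.inr (s i)) := funext hs
      simpa [BoundedFormula.realize_rel, Function.comp_def] using h.relMap_iff R s

theorem realize_alls_rel_imp_iff {m : ℕ} (R : L.Relations m) (ψ : L.BoundedFormula Empty m) :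
    Sentence.Realize M
        (BoundedFormula.alls ((R.boundedFormula fun k => Term.var (Sum.inr k)).imp ψ)) ↔
      ∀ xs : Fin m → M, Structure.RelMap R xs → ψ.Realize default xs := by
  refine BoundedFormula.realize_alls.trans ?_
  simp [BoundedFormula.realize_rel]

theorem IsLocalSentence.realize_of_sameAtomicType [L.IsRelational] {φ : L.Sentence}
    (hφ : IsLocalSentence φ)
    (h : ∀ {m : ℕ} [NeZero m] (R : L.Relations m) (xs : Fin m → M), Structure.RelMap R xs →
      ∃ (N : Type) (_ : L.Structure N) (ys : Fin m → N), N ⊨ φ ∧ SameAtomicType L xs ys) :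
    M ⊨ φ := by
  obtain ⟨m, hm, R, ψ, hψ, rfl⟩ := hφ
  refine (realize_alls_rel_imp_iff R ψ).2 fun xs hxs => ?_
  have : NeZero m := ⟨hm.ne'⟩
  obtain ⟨N, _, ys, hN, hxy⟩ := h R xs hxs
  exact (hxy.realize_iff_of_isQF hψ).2
    ((realize_alls_rel_imp_iff R ψ).1 hN ys ((hxy.relMap_iff R id).1 hxs))

theorem injective_of_relMap {Φ : L.Theory} (hGI : GITheory L ⊆ Φ) (hM : M ⊨ Φ) {n : ℕ}
    {R : L.Relations n} {xs : Fin n → M} (hxs : Structure.RelMap R xs) : Function.Injective xs := by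
  intro i j hij
  by_contra hne
  have hφ : M ⊨ giSentence R i j := hM.realize_of_mem _ (hGI ⟨n, R, i, j, hne, rfl⟩)
  simpa [hij] using (realize_alls_rel_imp_iff R _).1 hφ xs hxs

end LocalSentences

/-- A relation symbol applied to an injective tuple of natural numbers. By the General
Irreflexivity axioms no other tuple can carry a relation, so that a model with underlying set `ℕ`
is the same thing as a set of ground atoms. -/
@[ext]
structure GroundAtom (L : FirstOrder.Language.{u, v}) where
  arity : ℕ
  symb : L.Relations arity
  tuple : Fin arity ↪ ℕ

namespace GroundAtom

/-- The support of a ground atom: the set of entries of its tuple. -/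
def supp (a : GroundAtom L) : Finset ℕ := Finset.univ.map a.tuple

theorem card_supp (a : GroundAtom L) : a.supp.card = a.arity := by simp [supp]

theorem supp_subset_iff {a : GroundAtom L} {X : Finset ℕ} : a.supp ⊆ X ↔ ∀ i, a.tuple i ∈ X := by
  simp [supp, Finset.subset_iff]

theorem tuple_mem_supp (a : GroundAtom L) (i : Fin a.arity) : a.tuple i ∈ a.supp :=
  supp_subset_iff.1 subset_rfl i

instance : MulAction (Equiv.Perm ℕ) (GroundAtom L) where
  smul σ a := ⟨a.arity, a.symb, a.tuple.trans σ.toEmbedding⟩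
  one_smul _ := rfl
  mul_smul _ _ _ := rfl

theorem supp_smul (σ : Equiv.Perm ℕ) (a : GroundAtom L) : (σ • a).supp = σ • a.supp := by
  rw [supp, supp, Finset.smul_finset_def, Finset.map_eq_image, Finset.map_eq_image,
    Finset.image_image]
  rfl

end GroundAtom

/-- Two sets of ground atoms agree on a family `𝒴` of finite sets if they contain the same atoms
with support in `𝒴`. Agreement of the induced substructures on `X` is the case
`𝒴 = X.powerset`. -/
def AgreeOn (𝒴 : Finset (Finset ℕ)) (s s' : Set (GroundAtom L)) : Prop :=
  ∀ a : GroundAtom L, a.supp ∈ 𝒴 → (a ∈ s ↔ a ∈ s')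

namespace AgreeOn

variable {𝒴 𝒵 : Finset (Finset ℕ)} {s s' s'' : Set (GroundAtom L)}

theorem refl (𝒴 : Finset (Finset ℕ)) (s : Set (GroundAtom L)) : AgreeOn 𝒴 s s :=
  fun _ _ => Iff.rfl

theorem symm (h : AgreeOn 𝒴 s s') : AgreeOn 𝒴 s' s := fun a ha => (h a ha).symm

theorem trans (h : AgreeOn 𝒴 s s') (h' : AgreeOn 𝒴 s' s'') : AgreeOn 𝒴 s s'' :=
  fun a ha => (h a ha).trans (h' a ha)

theorem mono (h : AgreeOn 𝒵 s s') (h𝒴 : 𝒴 ⊆ 𝒵) : AgreeOn 𝒴 s s' := fun a ha => h a (h𝒴 ha)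

theorem union (h : AgreeOn 𝒴 s s') (h' : AgreeOn 𝒵 s s') : AgreeOn (𝒴 ∪ 𝒵) s s' :=
  fun a ha => (Finset.mem_union.1 ha).elim (h a) (h' a)

theorem smul {X : Finset ℕ} (h : AgreeOn X.powerset s s') (σ : Equiv.Perm ℕ) :
    AgreeOn (σ • X).powerset (σ • s) (σ • s') := by
  intro a ha
  simp only [Set.mem_smul_set_iff_inv_smul_mem]
  refine h _ ?_
  rwa [GroundAtom.supp_smul, Finset.mem_powerset, Finset.smul_finset_subset_iff, inv_inv,
    ← Finset.mem_powerset]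

end AgreeOn

namespace InfStruc

/-- The set of ground atoms that hold in a structure. -/
def diagram (M : InfStruc L) : Set (GroundAtom L) := {a | ⇑a.tuple ∈ M.rel a.symb}

/-- The structure in which exactly the given ground atoms hold. -/
def ofAtoms (s : Set (GroundAtom L)) : InfStruc L where
  rel n R := {t | ∃ ht : Function.Injective t, ⟨n, R, ⟨t, ht⟩⟩ ∈ s}

theorem diagram_ofAtoms (s : Set (GroundAtom L)) : (ofAtoms s).diagram = s := by
  ext a
  exact ⟨fun ⟨_, ha⟩ => ha, fun ha => ⟨a.tuple.injective, ha⟩⟩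

theorem injective_of_mem_rel [L.IsRelational] {Φ : L.Theory} (hGI : GITheory L ⊆ Φ)
    {M : InfStruc L} (hM : M ∈ KinfSet Φ) {n : ℕ} {R : L.Relations n} {t : Fin n → ℕ}
    (ht : t ∈ M.rel R) : Function.Injective t := by
  let := M.str
  exact injective_of_relMap hGI ⟨hM⟩ (xs := t) ht

theorem ofAtoms_diagram [L.IsRelational] {Φ : L.Theory} (hGI : GITheory L ⊆ Φ)
    {M : InfStruc L} (hM : M ∈ KinfSet Φ) : ofAtoms M.diagram = M := by
  obtain ⟨rel⟩ := M
  refine congrArg mk (funext fun n => funext fun R => Set.ext fun t => ?_)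
  exact ⟨fun ⟨_, ht⟩ => ht, fun ht => ⟨injective_of_mem_rel hGI hM ht, ht⟩⟩

end InfStruc

open InfStruc

section AgreeOnStructures

variable {σ : Equiv.Perm ℕ} {X : Finset ℕ} {s s' : Set (GroundAtom L)}

theorem agreeOn_smul_powerset_iff : AgreeOn (σ • X).powerset s (σ • s') ↔
    ∀ {n : ℕ} (R : L.Relations n) (t : Fin n → ℕ), (∀ i, t i ∈ X) →
      (σ ∘ t ∈ (ofAtoms s).rel R ↔ t ∈ (ofAtoms s').rel R) := by
  have hsupp (a : GroundAtom L) : (σ • a).supp ∈ (σ • X).powerset ↔ ∀ i, a.tuple i ∈ X := by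
    rw [GroundAtom.supp_smul, Finset.mem_powerset, Finset.smul_finset_subset_smul_finset_iff,
      GroundAtom.supp_subset_iff]
  refine ⟨fun h n R t ht => ?_, fun h a => ?_⟩
  · have key (hinj : Function.Injective t) :
        (⟨n, R, ⟨σ ∘ t, σ.injective.comp hinj⟩⟩ : GroundAtom L) ∈ s ↔ ⟨n, R, ⟨t, hinj⟩⟩ ∈ s' :=
      (h (σ • ⟨n, R, ⟨t, hinj⟩⟩) ((hsupp _).2 ht)).trans Set.smul_mem_smul_set_iff
    exact ⟨fun ⟨hinj, hs⟩ => ⟨hinj.of_comp, (key hinj.of_comp).1 hs⟩,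
      fun ⟨hinj, hs⟩ => ⟨σ.injective.comp hinj, (key hinj).2 hs⟩⟩
  · obtain ⟨b, rfl⟩ := MulAction.surjective σ a
    intro hb
    rw [Set.smul_mem_smul_set_iff, ← diagram_ofAtoms s, ← diagram_ofAtoms s']
    exact h b.symb b.tuple ((hsupp b).1 hb)

theorem AgreeOn.sameAtomicType [L.IsRelational] (h : AgreeOn (σ • X).powerset s (σ • s')) {m : ℕ}
    {xs : Fin m → ℕ} (hxs : ∀ i, xs i ∈ X) :
    @SameAtomicType L ℕ ℕ (ofAtoms s).str (ofAtoms s').str m (σ ∘ xs) xs :=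
  @SameAtomicType.mk L ℕ ℕ (ofAtoms s).str (ofAtoms s').str m (σ ∘ xs) xs
    (fun _ _ => σ.injective.eq_iff) (fun _ _ => agreeOn_smul_powerset_iff.1 h _ _ fun _ => hxs _)

end AgreeOnStructures

theorem FinStruc.restrict_mk_rel (A : FinStruc L) :
    (⟨A.rel⟩ : InfStruc L).restrict A.carrier = A := by
  obtain ⟨X, rel, rel_mem⟩ := A
  have hrel : (fun n (R : L.Relations n) => {t | t ∈ rel R ∧ ∀ i, t i ∈ X}) = rel :=
    funext fun n => funext fun R => Set.ext fun t => and_iff_left_of_imp (rel_mem R t)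
  simp only [InfStruc.restrict, hrel]

/-- The class of finite structures axiomatized by `Φ`. -/
def finModels [L.IsRelational] (Φ : L.Theory) : Set (FinStruc L) := {A | ∀ φ ∈ Φ, A.Sat φ}

/-- `K^∞` as a set of sets of ground atoms. -/
def modelDiagrams [L.IsRelational] (Φ : L.Theory) : Set (Set (GroundAtom L)) :=
  {s | ofAtoms s ∈ KinfSet Φ}

section LocalTheory

variable [L.IsRelational] {Φ : L.Theory}

theorem restrict_mem_finModels (hloc : ∀ φ ∈ Φ, IsLocalSentence φ) {M : InfStruc L}
    (hM : M ∈ KinfSet Φ) (X : Finset ℕ) : M.restrict X ∈ finModels Φ := by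
  refine fun φ hφ => (hloc φ hφ).realize_of_sameAtomicType fun R xs _ => ?_
  refine ⟨ℕ, M.str, Subtype.val ∘ xs, hM φ hφ, ?_⟩
  let := M.str
  exact ⟨fun _ _ => Subtype.ext_iff,
    fun R' e => ⟨fun h => h.1, fun h => ⟨h, fun i => (xs (e i)).2⟩⟩⟩

theorem mk_rel_mem_KinfSet (hloc : ∀ φ ∈ Φ, IsLocalSentence φ) {A : FinStruc L}
    (hA : A ∈ finModels Φ) : (⟨A.rel⟩ : InfStruc L) ∈ KinfSet Φ := by
  intro φ hφ
  let := (⟨A.rel⟩ : InfStruc L).str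
  refine (hloc φ hφ).realize_of_sameAtomicType fun R xs hxs => ?_
  exact ⟨{x // x ∈ A.carrier}, A.str, fun i => ⟨xs i, A.rel_mem R xs hxs i⟩, hA φ hφ,
    fun _ _ => Subtype.mk_eq_mk.symm, fun _ _ => Iff.rfl⟩

theorem mem_finModels_iff (hloc : ∀ φ ∈ Φ, IsLocalSentence φ) (hGI : GITheory L ⊆ Φ)
    {A : FinStruc L} :
    A ∈ finModels Φ ↔ ∃ s ∈ modelDiagrams Φ, (ofAtoms s).restrict A.carrier = A := by
  refine ⟨fun hA => ⟨InfStruc.diagram ⟨A.rel⟩, ?_⟩,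
    fun ⟨s, hs, hA⟩ => hA ▸ restrict_mem_finModels hloc hs A.carrier⟩
  have hM := mk_rel_mem_KinfSet hloc hA
  rw [modelDiagrams, Set.mem_ofPred, ofAtoms_diagram hGI hM]
  exact ⟨hM, A.restrict_mk_rel⟩

end LocalTheory

/-- The two closure properties of the set of diagrams of models of a local theory that the
argument uses: membership is decided atom by atom on the substructure induced on the support of the
atom, and is invariant under permutations of `ℕ`. Local sentences quantify over at least one
variable, hence say nothing about atoms with empty support. -/
structure IsLocalFamily (𝒦 : Set (Set (GroundAtom L))) : Prop where
  mem_of_agreeOn : ∀ {s : Set (GroundAtom L)},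
    (∀ a ∈ s, a.supp.Nonempty → ∃ s' ∈ 𝒦, AgreeOn a.supp.powerset s s') → s ∈ 𝒦
  smul_mem : ∀ (σ : Equiv.Perm ℕ) {s : Set (GroundAtom L)}, s ∈ 𝒦 → σ • s ∈ 𝒦

theorem isLocalFamily_modelDiagrams [L.IsRelational] {Φ : L.Theory}
    (hloc : ∀ φ ∈ Φ, IsLocalSentence φ) : IsLocalFamily (modelDiagrams Φ) where
  mem_of_agreeOn {s} h φ hφ := by
    let := (ofAtoms s).str
    refine (hloc φ hφ).realize_of_sameAtomicType fun {m} _ R xs ⟨hxs, ha⟩ => ?_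
    obtain ⟨s', hs', hag⟩ := h _ ha ⟨_, GroundAtom.tuple_mem_supp ⟨m, R, ⟨xs, hxs⟩⟩ 0⟩
    refine ⟨ℕ, (ofAtoms s').str, xs, hs' φ hφ, ?_⟩
    exact AgreeOn.sameAtomicType (σ := 1) (by simpa only [one_smul] using hag)
      (GroundAtom.tuple_mem_supp ⟨m, R, ⟨xs, hxs⟩⟩)
  smul_mem σ s hs φ hφ := by
    let := (ofAtoms (σ • s)).str
    refine (hloc φ hφ).realize_of_sameAtomicType fun R xs _ => ?_
    obtain ⟨ys, rfl⟩ : ∃ ys, σ ∘ ys = xs := ⟨σ.symm ∘ xs, by ext; simp⟩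
    exact ⟨ℕ, (ofAtoms s).str, ys, hs φ hφ, (AgreeOn.refl _ _).sameAtomicType
      fun i => Finset.mem_image_of_mem ys (Finset.mem_univ i)⟩

section LowerFamilies

theorem isLowerSet_powerset (X : Finset ℕ) : IsLowerSet (X.powerset : Set (Finset ℕ)) := by
  intro Y Z hZY hY
  exact Finset.mem_powerset.2 (hZY.trans (Finset.mem_powerset.1 hY))

theorem isLowerSet_union_of_ssubsets_subset {𝒴 𝒵 : Finset (Finset ℕ)}
    (h𝒴 : IsLowerSet (𝒴 : Set (Finset ℕ))) (h𝒵 : ∀ Y ∈ 𝒵, Y.ssubsets ⊆ 𝒴) :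
    IsLowerSet ((𝒴 ∪ 𝒵 : Finset (Finset ℕ)) : Set (Finset ℕ)) := by
  intro Y Z hZY hY
  obtain rfl | hlt := hZY.eq_or_ssubset
  · exact hY
  · refine Finset.mem_union_left _ ?_
    exact (Finset.mem_union.1 hY).elim (h𝒴 hZY) fun h => h𝒵 Y h (Finset.mem_ssubsets.2 hlt)

end LowerFamilies

section Families

variable {𝒦 : Set (Set (GroundAtom L))} {𝒴 𝒵 : Finset (Finset ℕ)} {s s' : Set (GroundAtom L)}

/-- The atoms of `s` with support in `𝒴`. -/
def restrictTo (𝒴 : Finset (Finset ℕ)) (s : Set (GroundAtom L)) : Set (GroundAtom L) :=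
  {a ∈ s | a.supp ∈ 𝒴}

theorem restrictTo_eq_iff_agreeOn : restrictTo 𝒴 s = restrictTo 𝒴 s' ↔ AgreeOn 𝒴 s s' := by
  simp only [Set.ext_iff, restrictTo, Set.mem_ofPred_eq, AgreeOn, and_congr_left_iff]

theorem agreeOn_restrictTo (𝒴 : Finset (Finset ℕ)) (s : Set (GroundAtom L)) :
    AgreeOn 𝒴 (restrictTo 𝒴 s) s :=
  fun _ ha => and_iff_left ha

theorem IsLocalFamily.exists_amalgam (h𝒦 : IsLocalFamily 𝒦) (h𝒴 : IsLowerSet (𝒴 : Set (Finset ℕ)))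
    (h𝒵 : IsLowerSet (𝒵 : Set (Finset ℕ))) (hs : s ∈ 𝒦) (hs' : s' ∈ 𝒦)
    (h : AgreeOn (𝒴 ∩ 𝒵) s s') : ∃ t ∈ 𝒦, AgreeOn 𝒴 t s ∧ AgreeOn 𝒵 t s' := by
  have hts : AgreeOn 𝒴 (restrictTo 𝒴 s ∪ restrictTo 𝒵 s') s := fun a ha =>
    ⟨fun hat => hat.elim And.left fun has' => (h a (Finset.mem_inter.2 ⟨ha, has'.2⟩)).2 has'.1,
      fun has => Or.inl ⟨has, ha⟩⟩
  have hts' : AgreeOn 𝒵 (restrictTo 𝒴 s ∪ restrictTo 𝒵 s') s' := fun a ha =>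
    ⟨fun hat => hat.elim (fun has => (h a (Finset.mem_inter.2 ⟨has.2, ha⟩)).1 has.1) And.left,
      fun has' => Or.inr ⟨has', ha⟩⟩
  refine ⟨_, h𝒦.mem_of_agreeOn fun a hat _ => ?_, hts, hts'⟩
  obtain ha | ha := hat
  · exact ⟨s, hs, hts.mono fun Y hY => h𝒴 (Finset.mem_powerset.1 hY) ha.2⟩
  · exact ⟨s', hs', hts'.mono fun Y hY => h𝒵 (Finset.mem_powerset.1 hY) ha.2⟩

theorem IsLocalFamily.restrictTo_mem (h𝒦 : IsLocalFamily 𝒦)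
    (h𝒴 : IsLowerSet (𝒴 : Set (Finset ℕ))) (hs : s ∈ 𝒦) : restrictTo 𝒴 s ∈ 𝒦 :=
  h𝒦.mem_of_agreeOn fun _ ha _ => ⟨s, hs, (agreeOn_restrictTo 𝒴 s).mono
    fun _ hY => h𝒴 (Finset.mem_powerset.1 hY) ha.2⟩

theorem finite_setOf_supp_eq [∀ n, Finite (L.Relations n)] (Y : Finset ℕ) :
    {a : GroundAtom L | a.supp = Y}.Finite ∧
      {a : GroundAtom L | a.supp = Y}.ncard ≤ Nat.card (L.Relations Y.card) * Y.card.factorial := by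
  let f (p : L.Relations Y.card × (Fin Y.card ↪ Y)) : GroundAtom L :=
    ⟨Y.card, p.1, p.2.trans (Function.Embedding.subtype _)⟩
  have hsub : {a : GroundAtom L | a.supp = Y} ⊆ Set.range f := by
    rintro ⟨n, R, t⟩ hY
    obtain rfl : n = Y.card := by
      rw [← Set.mem_ofPred.1 hY, GroundAtom.card_supp]
    exact ⟨⟨R, t.codRestrict Y (GroundAtom.supp_subset_iff.1 hY.le)⟩, rfl⟩
  refine ⟨(Set.finite_range f).subset hsub, (Set.ncard_le_ncard hsub).trans ?_⟩
  rw [← Set.image_univ]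
  refine (Set.ncard_image_le Set.finite_univ).trans_eq ?_
  simp [Set.ncard_univ, Nat.descFactorial_self]

theorem finite_setOf_supp_mem [∀ n, Finite (L.Relations n)] (𝒴 : Finset (Finset ℕ)) :
    {a : GroundAtom L | a.supp ∈ 𝒴}.Finite := by
  have h := 𝒴.finite_toSet.biUnion fun Y _ => (finite_setOf_supp_eq (L := L) Y).1
  exact h.subset fun a ha => Set.mem_biUnion ha rfl

theorem finite_range_restrictTo [∀ n, Finite (L.Relations n)] (𝒴 : Finset (Finset ℕ)) :
    (Set.range (restrictTo (L := L) 𝒴)).Finite :=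
  (finite_setOf_supp_mem 𝒴).finite_subsets.subset (Set.range_subset_iff.2 fun _ _ ha => ha.2)

/-- The members of `𝒦` that agree with `s` on `𝒴`. -/
def agreeCylinder (𝒦 : Set (Set (GroundAtom L))) (𝒴 : Finset (Finset ℕ)) (s : Set (GroundAtom L)) :
    Set (Set (GroundAtom L)) :=
  {t ∈ 𝒦 | AgreeOn 𝒴 t s}

theorem AgreeOn.agreeCylinder_eq (h : AgreeOn 𝒴 s s') :
    agreeCylinder 𝒦 𝒴 s = agreeCylinder 𝒦 𝒴 s' :=
  Set.ext fun _ => and_congr_right fun _ => ⟨fun ht => ht.trans h, fun ht => ht.trans h.symm⟩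

/-- The ways in which the atoms with support exactly `Y` can be chosen in a member of `𝒦` that
agrees with `s` on the proper subsets of `Y`. -/
def choices (𝒦 : Set (Set (GroundAtom L))) (s : Set (GroundAtom L)) (Y : Finset ℕ) :
    Set (Set (GroundAtom L)) :=
  restrictTo {Y} '' agreeCylinder 𝒦 Y.ssubsets s

section Choices

variable {Y : Finset ℕ}

theorem AgreeOn.choices_eq (h : AgreeOn Y.ssubsets s s') : choices 𝒦 s Y = choices 𝒦 s' Y := by
  rw [choices, choices, h.agreeCylinder_eq]

theorem finite_choices [∀ n, Finite (L.Relations n)] : (choices 𝒦 s Y).Finite :=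
  (finite_range_restrictTo {Y}).subset (Set.image_subset_range _ _)

theorem ncard_choices_ne_zero [∀ n, Finite (L.Relations n)] (hs : s ∈ 𝒦) :
    (choices 𝒦 s Y).ncard ≠ 0 :=
  Set.ncard_ne_zero_of_mem (Set.mem_image_of_mem _ ⟨hs, .refl _ s⟩) finite_choices

theorem ncard_choices_le [∀ n, Finite (L.Relations n)] :
    (choices 𝒦 s Y).ncard ≤ 2 ^ (Nat.card (L.Relations Y.card) * Y.card.factorial) := by
  obtain ⟨hfin, hcard⟩ := finite_setOf_supp_eq (L := L) Y
  have hsub : choices 𝒦 s Y ⊆ 𝒫 {a | a.supp = Y} :=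
    Set.image_subset_iff.2 fun _ _ _ ha => Finset.mem_singleton.1 ha.2
  calc (choices 𝒦 s Y).ncard ≤ (𝒫 {a : GroundAtom L | a.supp = Y}).ncard :=
        Set.ncard_le_ncard hsub hfin.finite_subsets
    _ = 2 ^ {a : GroundAtom L | a.supp = Y}.ncard := Set.ncard_powerset _ hfin
    _ ≤ _ := Nat.pow_le_pow_right two_pos hcard

theorem IsLocalFamily.exists_extend_choice (h𝒦 : IsLocalFamily 𝒦)
    (h𝒴 : IsLowerSet (𝒴 : Set (Finset ℕ))) (hY : Y ∉ 𝒴) (hs : s ∈ 𝒦) {c : Set (GroundAtom L)}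
    (hc : c ∈ choices 𝒦 s Y) : ∃ t ∈ 𝒦, AgreeOn 𝒴 t s ∧ restrictTo {Y} t = c := by
  obtain ⟨s', ⟨hs', hag⟩, rfl⟩ := hc
  have hinter : 𝒴 ∩ Y.powerset ⊆ Y.ssubsets := by
    intro Z hZ
    obtain ⟨hZ𝒴, hZY⟩ := Finset.mem_inter.1 hZ
    exact Finset.mem_ssubsets.2
      ((Finset.mem_powerset.1 hZY).ssubset_of_ne (ne_of_mem_of_not_mem hZ𝒴 hY))
  obtain ⟨t, ht, hts, hts'⟩ := h𝒦.exists_amalgam h𝒴 (𝒵 := Y.powerset)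
    (isLowerSet_powerset Y) hs hs' (hag.symm.mono hinter)
  exact ⟨t, ht, hts, restrictTo_eq_iff_agreeOn.2 <| hts'.mono <|
    Finset.singleton_subset_iff.2 (Finset.mem_powerset_self Y)⟩

end Choices

theorem ncard_image_eq_ncard_image {α β γ : Type*} {S : Set α} {f : α → β} {g : α → γ}
    (h : ∀ a ∈ S, ∀ b ∈ S, f a = f b ↔ g a = g b) : (f '' S).ncard = (g '' S).ncard := by
  let T : Set (β × γ) := (fun a => (f a, g a)) '' S
  have hfst : Set.InjOn Prod.fst T := by
    rintro _ ⟨a, ha, rfl⟩ _ ⟨b, hb, rfl⟩ hab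
    exact Prod.ext hab ((h a ha b hb).1 hab)
  have hsnd : Set.InjOn Prod.snd T := by
    rintro _ ⟨a, ha, rfl⟩ _ ⟨b, hb, rfl⟩ hab
    exact Prod.ext ((h a ha b hb).2 hab) hab
  calc (f '' S).ncard = (Prod.fst '' T).ncard := by rw [Set.image_image]
    _ = (Prod.snd '' T).ncard := by rw [hfst.ncard_image, hsnd.ncard_image]
    _ = (g '' S).ncard := by rw [Set.image_image]

theorem IsLocalFamily.ncard_restrictTo_image_agreeCylinder (h𝒦 : IsLocalFamily 𝒦)
    (h𝒴 : IsLowerSet (𝒴 : Set (Finset ℕ))) (hs : s ∈ 𝒦) (hdisj : Disjoint 𝒵 𝒴)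
    (h𝒵 : ∀ Y ∈ 𝒵, Y.ssubsets ⊆ 𝒴) :
    (restrictTo 𝒵 '' agreeCylinder 𝒦 𝒴 s).ncard = ∏ Y ∈ 𝒵, (choices 𝒦 s Y).ncard := by
  induction 𝒵 using Finset.induction_on with
  | empty =>
    have hempty (t : Set (GroundAtom L)) : restrictTo ∅ t = ∅ := by simp [restrictTo]
    have hne : (agreeCylinder 𝒦 𝒴 s).Nonempty := ⟨s, hs, .refl _ s⟩
    simp [hempty, hne.image_const]
  | insert Y 𝒵 hY𝒵 ih =>
    obtain ⟨hY𝒴, hdisj⟩ := Finset.disjoint_insert_left.1 hdisj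
    obtain ⟨hY, h𝒵⟩ := Finset.forall_mem_insert _ _ _ |>.1 h𝒵
    have hpair : (fun t => (restrictTo 𝒵 t, restrictTo {Y} t)) '' agreeCylinder 𝒦 𝒴 s =
        (restrictTo 𝒵 '' agreeCylinder 𝒦 𝒴 s) ×ˢ choices 𝒦 s Y := by
      refine Set.Subset.antisymm ?_ ?_
      · rintro _ ⟨t, ht, rfl⟩
        exact ⟨Set.mem_image_of_mem _ ht, Set.mem_image_of_mem _ ⟨ht.1, ht.2.mono hY⟩⟩
      · rintro ⟨_, c⟩ ⟨⟨t, ht, rfl⟩, hc⟩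
        rw [(ht.2.mono hY).symm.choices_eq] at hc
        obtain ⟨t', ht', hag, rfl⟩ := h𝒦.exists_extend_choice
          (isLowerSet_union_of_ssubsets_subset h𝒴 h𝒵) (by simp [hY𝒴, hY𝒵]) ht.1 hc
        refine ⟨t', ⟨ht', (hag.mono Finset.subset_union_left).trans ht.2⟩, ?_⟩
        simp only [restrictTo_eq_iff_agreeOn.2 (hag.mono Finset.subset_union_right)]
    rw [Finset.prod_insert hY𝒵, mul_comm, ← ih hdisj h𝒵, ← Set.ncard_prod, ← hpair]
    refine ncard_image_eq_ncard_image fun t _ t' _ => ?_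
    simp only [Prod.mk.injEq, restrictTo_eq_iff_agreeOn, AgreeOn, Finset.mem_insert,
      Finset.mem_singleton, or_imp, forall_and, and_comm]

end Families

section FiniteMeasure

variable {α β : Type*} [MeasurableSpace α]

theorem sum_measure_inter_preimage_singleton {μ : Measure α} {S : Set α} {f : α → β}
    {B : Finset β} (hf : ∀ b ∈ B, MeasurableSet (f ⁻¹' {b})) (hS : Set.MapsTo f S B) :
    ∑ b ∈ B, μ (S ∩ f ⁻¹' {b}) = μ S := by
  calc ∑ b ∈ B, μ (S ∩ f ⁻¹' {b}) = ∑ b ∈ B, μ.restrict S (f ⁻¹' {b}) :=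
        Finset.sum_congr rfl fun b hb => by rw [Measure.restrict_apply (hf b hb), Set.inter_comm]
    _ = μ.restrict S (f ⁻¹' B) := sum_measure_preimage_singleton B hf
    _ = μ S := by
      rw [Measure.restrict_apply, Set.inter_eq_self_of_subset_right (show S ⊆ f ⁻¹' B from hS)]
      rw [← Set.biUnion_preimage_singleton]
      exact B.measurableSet_biUnion hf

theorem mul_measure_le_measure_inter_of_fiber {μ : Measure α} {δ : ℝ≥0∞} {S E : Set α} {f : α → β}
    (hfin : (Set.range f).Finite) (hf : ∀ b, MeasurableSet (f ⁻¹' {b}))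
    (h : ∀ a ∈ S, δ * μ (S ∩ f ⁻¹' {f a}) ≤ μ (S ∩ f ⁻¹' {f a} ∩ E)) :
    δ * μ S ≤ μ (S ∩ E) := by
  have hmem (a : α) : f a ∈ hfin.toFinset := hfin.mem_toFinset.2 ⟨a, rfl⟩
  rw [← sum_measure_inter_preimage_singleton (fun b _ => hf b) fun a (_ : a ∈ S) => hmem a,
    ← sum_measure_inter_preimage_singleton (fun b _ => hf b) fun a (_ : a ∈ S ∩ E) => hmem a,
    Finset.mul_sum]
  refine Finset.sum_le_sum fun b _ => ?_
  obtain hempty | ⟨a, ha, rfl⟩ := (S ∩ f ⁻¹' {b}).eq_empty_or_nonempty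
  · simp [hempty]
  · exact (h a ha).trans_eq (by rw [Set.inter_right_comm])

theorem measure_sdiff_iUnion_eq_zero {μ : Measure α} [IsFiniteMeasure μ] {δ : ℝ≥0∞} (hδ : δ ≠ 0)
    {S : Set α} {E : ℕ → Set α} (hS : MeasurableSet S) (hE : ∀ m, MeasurableSet (E m))
    (h : ∀ m, δ * μ (S \ ⋃ j < m, E j) ≤ μ ((S \ ⋃ j < m, E j) ∩ E m)) :
    μ (S \ ⋃ j, E j) = 0 := by
  let D (m : ℕ) : Set α := (S \ ⋃ j < m, E j) ∩ E m
  have hD (m : ℕ) : MeasurableSet (D m) :=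
    (hS.diff (.iUnion fun j => .iUnion fun _ => hE j)).inter (hE m)
  have hdisj : Pairwise (Function.onFun Disjoint D) := by
    refine (pairwise_disjoint_on D).2 fun i j hij => ?_
    exact Set.disjoint_left.2 fun a hi hj => hj.1.2 (Set.mem_biUnion hij hi.2)
  by_contra hpos
  have hlarge (m : ℕ) : δ * μ (S \ ⋃ j, E j) ≤ μ (D m) := by
    refine le_trans ?_ (h m)
    gcongr δ * μ (S \ ?_)
    exact Set.iUnion₂_subset_iUnion _ _
  refine Set.infinite_univ ((Measure.finite_const_le_meas_of_disjoint_iUnion μ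
    (pos_iff_ne_zero.2 (mul_ne_zero hδ hpos)) hD hdisj (measure_ne_top μ _)).subset
    fun m _ => hlarge m)

theorem measure_inter_eq_of_measure_eq_univ {μ : Measure α} [IsFiniteMeasure μ] {s t : Set α}
    (hs : μ s = μ Set.univ) (ht : MeasurableSet t) : μ (t ∩ s) = μ t := by
  have hae : toMeasurable μ s =ᵐ[μ] Set.univ :=
    (ae_eq_univ_iff_measure_eq (measurableSet_toMeasurable μ s).nullMeasurableSet).2
      ((measure_toMeasurable s).trans hs)
  rw [Set.inter_comm, ← Measure.measure_toMeasurable_inter ht (measure_ne_top μ s)]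
  simpa using measure_congr (hae.inter (ae_eq_refl t))

end FiniteMeasure

section FramewiseUniform

variable {𝒦 : Set (Set (GroundAtom L))} {𝒴 : Finset (Finset ℕ)} {s : Set (GroundAtom L)}

theorem measurableSet_setOf_agreeOn [∀ n, Finite (L.Relations n)] (𝒴 : Finset (Finset ℕ))
    (s : Set (GroundAtom L)) : MeasurableSet {t | AgreeOn 𝒴 t s} := by
  have hInter : {t | AgreeOn 𝒴 t s} =
      ⋂ a ∈ {a : GroundAtom L | a.supp ∈ 𝒴}, {t | a ∈ t ↔ a ∈ s} := by
    ext t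
    simp [AgreeOn]
  rw [hInter]
  refine (finite_setOf_supp_mem 𝒴).measurableSet_biInter fun a _ => ?_
  exact measurableSet_setOfPred.2 ((measurable_set_mem a).iff measurable_const)

theorem measurableSet_preimage_restrictTo [∀ n, Finite (L.Relations n)] (𝒴 : Finset (Finset ℕ))
    (C : Set (Set (GroundAtom L))) : MeasurableSet (restrictTo 𝒴 ⁻¹' C) := by
  rw [← Set.preimage_inter_range, ← Set.biUnion_preimage_singleton]
  refine ((finite_range_restrictTo 𝒴).inter_of_right C).measurableSet_biUnion ?_
  rintro _ ⟨-, s, rfl⟩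
  simpa only [Set.preimage, Set.mem_singleton_iff, restrictTo_eq_iff_agreeOn] using
    measurableSet_setOf_agreeOn 𝒴 s

theorem IsLocalFamily.measurableSet [∀ n, Finite (L.Relations n)] (h𝒦 : IsLocalFamily 𝒦) :
    MeasurableSet 𝒦 := by
  have hInter : 𝒦 = ⋂ X : Finset ℕ, restrictTo X.powerset ⁻¹' 𝒦 := by
    refine Set.Subset.antisymm (Set.subset_iInter fun X s hs =>
      h𝒦.restrictTo_mem (isLowerSet_powerset X) hs) fun s hs => ?_
    exact h𝒦.mem_of_agreeOn fun a _ _ =>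
      ⟨_, Set.mem_iInter.1 hs a.supp, (agreeOn_restrictTo a.supp.powerset s).symm⟩
  rw [hInter]
  exact .iInter fun X => measurableSet_preimage_restrictTo X.powerset 𝒦

theorem IsLocalFamily.measurableSet_agreeCylinder [∀ n, Finite (L.Relations n)]
    (h𝒦 : IsLocalFamily 𝒦) : MeasurableSet (agreeCylinder 𝒦 𝒴 s) :=
  h𝒦.measurableSet.inter (measurableSet_setOf_agreeOn 𝒴 s)

/-- A measure is frame-wise uniform on `𝒦` if, in every lower family, the atoms are chosen support
by support, each time uniformly among the choices that the smaller supports allow. -/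
def IsFramewiseUniform (𝒦 : Set (Set (GroundAtom L))) (ν : Measure (Set (GroundAtom L))) : Prop :=
  ∀ {s}, s ∈ 𝒦 → ∀ {𝒴 : Finset (Finset ℕ)}, IsLowerSet (𝒴 : Set (Finset ℕ)) →
    ν (agreeCylinder 𝒦 𝒴 s) = ∏ Y ∈ 𝒴, ((choices 𝒦 s Y).ncard : ℝ≥0∞)⁻¹

theorem AgreeOn.prod_choices_eq {s s' : Set (GroundAtom L)} (h : AgreeOn 𝒴 s s')
    (h𝒴 : IsLowerSet (𝒴 : Set (Finset ℕ))) :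
    ∏ Y ∈ 𝒴, ((choices 𝒦 s Y).ncard : ℝ≥0∞)⁻¹ = ∏ Y ∈ 𝒴, ((choices 𝒦 s' Y).ncard : ℝ≥0∞)⁻¹ := by
  refine Finset.prod_congr rfl fun Y hY => ?_
  rw [(h.mono fun Z hZ => h𝒴 (Finset.mem_ssubsets.1 hZ).subset hY).choices_eq]

/-- A positive lower bound for the conditional probability that a frame-wise uniform random
structure induces a prescribed structure on a set of `n` points. -/
noncomputable def extensionBound (L : FirstOrder.Language.{u, v}) (n : ℕ) : ℝ≥0∞ :=
  ∏ i ∈ Finset.range (n + 1), (2 ^ (Nat.card (L.Relations i) * i.factorial))⁻¹ ^ n.choose i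

theorem extensionBound_ne_zero (n : ℕ) : extensionBound L n ≠ 0 :=
  Finset.prod_ne_zero_iff.2 fun _ _ => pow_ne_zero _ (ENNReal.inv_ne_zero.2 (by finiteness))

variable [∀ n, Finite (L.Relations n)] {ν : Measure (Set (GroundAtom L))}

theorem measure_agreeCylinder_of_union_singleton (h𝒦 : IsLocalFamily 𝒦)
    (h𝒴 : IsLowerSet (𝒴 : Set (Finset ℕ))) {Y : Finset ℕ} (hY : Y ∉ 𝒴) (hY𝒴 : Y.ssubsets ⊆ 𝒴)
    (h : ∀ t ∈ 𝒦, ν (agreeCylinder 𝒦 (𝒴 ∪ {Y}) t) =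
      ∏ Z ∈ 𝒴 ∪ {Y}, ((choices 𝒦 t Z).ncard : ℝ≥0∞)⁻¹) (hs : s ∈ 𝒦) :
    ν (agreeCylinder 𝒦 𝒴 s) = ∏ Z ∈ 𝒴, ((choices 𝒦 s Z).ncard : ℝ≥0∞)⁻¹ := by
  have hfin : (choices 𝒦 s Y).Finite := finite_choices
  have hmaps : Set.MapsTo (restrictTo {Y}) (agreeCylinder 𝒦 𝒴 s) hfin.toFinset := fun t ht =>
    hfin.mem_toFinset.2 (Set.mem_image_of_mem _ ⟨ht.1, ht.2.mono hY𝒴⟩)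
  have hfiber (c) (hc : c ∈ hfin.toFinset) : ν (agreeCylinder 𝒦 𝒴 s ∩ restrictTo {Y} ⁻¹' {c}) =
      ((choices 𝒦 s Y).ncard : ℝ≥0∞)⁻¹ * ∏ Z ∈ 𝒴, ((choices 𝒦 s Z).ncard : ℝ≥0∞)⁻¹ := by
    obtain ⟨t, ht, hts, rfl⟩ := h𝒦.exists_extend_choice h𝒴 hY hs (hfin.mem_toFinset.1 hc)
    have heq : agreeCylinder 𝒦 𝒴 s ∩ restrictTo {Y} ⁻¹' {restrictTo {Y} t} =
        agreeCylinder 𝒦 (𝒴 ∪ {Y}) t := by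
      ext t'
      simp only [agreeCylinder, Set.mem_inter_iff, Set.mem_preimage, Set.mem_singleton_iff,
        restrictTo_eq_iff_agreeOn, Set.mem_ofPred_eq]
      exact ⟨fun ⟨⟨ht', h₁⟩, h₂⟩ => ⟨ht', (h₁.trans hts.symm).union h₂⟩, fun ⟨ht', h₁⟩ =>
        ⟨⟨ht', (h₁.mono Finset.subset_union_left).trans hts⟩, h₁.mono Finset.subset_union_right⟩⟩
    rw [heq, h t ht, Finset.prod_union (Finset.disjoint_singleton_right.2 hY),
      hts.prod_choices_eq h𝒴, Finset.prod_singleton, (hts.mono hY𝒴).choices_eq, mul_comm]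
  rw [← sum_measure_inter_preimage_singleton
    (fun c _ => measurableSet_preimage_restrictTo {Y} {c}) hmaps, Finset.sum_congr rfl hfiber,
    Finset.sum_const, ← Set.ncard_eq_toFinset_card _ hfin, nsmul_eq_mul, ← mul_assoc,
    ENNReal.mul_inv_cancel (Nat.cast_ne_zero.2 (ncard_choices_ne_zero hs))
      (ENNReal.natCast_ne_top _), one_mul]

theorem isFramewiseUniform_of_powerset (h𝒦 : IsLocalFamily 𝒦)
    (h : ∀ s ∈ 𝒦, ∀ X : Finset ℕ, ν (agreeCylinder 𝒦 X.powerset s) =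
      ∏ Y ∈ X.powerset, ((choices 𝒦 s Y).ncard : ℝ≥0∞)⁻¹) : IsFramewiseUniform 𝒦 ν := by
  intro s hs 𝒴 h𝒴
  obtain ⟨X, hX⟩ : ∃ X : Finset ℕ, 𝒴 ⊆ X.powerset :=
    ⟨𝒴.sup id, fun Y hY => Finset.mem_powerset.2 (Finset.le_sup (f := id) hY)⟩
  induction hn : (X.powerset \ 𝒴).card generalizing 𝒴 s with
  | zero =>
    obtain rfl : 𝒴 = X.powerset :=
      hX.antisymm (Finset.sdiff_eq_empty_iff_subset.1 (Finset.card_eq_zero.1 hn))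
    exact h s hs X
  | succ n ih =>
    obtain ⟨Y, hYmem, hYmin⟩ := Finset.exists_minimal (s := X.powerset \ 𝒴)
      (Finset.card_pos.1 (by omega))
    obtain ⟨hYX, hY⟩ := Finset.mem_sdiff.1 hYmem
    have hY𝒴 : Y.ssubsets ⊆ 𝒴 := by
      intro Z hZ
      have hlt := Finset.mem_ssubsets.1 hZ
      by_contra hZ𝒴
      exact hlt.2 (hYmin (Finset.mem_sdiff.2 ⟨isLowerSet_powerset X hlt.1 hYX, hZ𝒴⟩) hlt.1)
    refine measure_agreeCylinder_of_union_singleton h𝒦 h𝒴 hY hY𝒴 (fun t ht => ih ht ?_ ?_ ?_) hs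
    · exact isLowerSet_union_of_ssubsets_subset h𝒴 (by simpa using hY𝒴)
    · exact Finset.union_subset hX (Finset.singleton_subset_iff.2 hYX)
    · rw [← Finset.sup_eq_union, ← sdiff_sdiff_left, Finset.sdiff_singleton_eq_erase,
        Finset.card_erase_of_mem hYmem, hn, Nat.add_sub_cancel]

theorem extensionBound_le_prod_choices (G : Finset ℕ) :
    extensionBound L G.card ≤ ∏ Y ∈ G.powerset, ((choices 𝒦 s Y).ncard : ℝ≥0∞)⁻¹ := by
  let b (i : ℕ) : ℝ≥0∞ := (2 ^ (Nat.card (L.Relations i) * i.factorial))⁻¹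
  calc extensionBound L G.card = ∏ Y ∈ G.powerset, b Y.card := by
        rw [Finset.prod_powerset]
        exact Finset.prod_congr rfl fun i _ => (Finset.prod_powersetCard i G b).symm
    _ ≤ _ := Finset.prod_le_prod' fun Y _ => ENNReal.inv_le_inv.2 (mod_cast ncard_choices_le)

theorem IsFramewiseUniform.extensionBound_mul_le (hν : IsFramewiseUniform 𝒦 ν)
    (h𝒦 : IsLocalFamily 𝒦) (h𝒴 : IsLowerSet (𝒴 : Set (Finset ℕ))) {B : Set (GroundAtom L)}
    (hs : s ∈ 𝒦) (hB : B ∈ 𝒦) {G : Finset ℕ} (h : AgreeOn (𝒴 ∩ G.powerset) s B) :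
    extensionBound L G.card * ν (agreeCylinder 𝒦 𝒴 s) ≤
      ν (agreeCylinder 𝒦 𝒴 s ∩ {t | AgreeOn G.powerset t B}) := by
  have hG := isLowerSet_powerset G
  obtain ⟨t, ht, hts, htB⟩ := h𝒦.exists_amalgam h𝒴 hG hs hB h
  let w (Y : Finset ℕ) : ℝ≥0∞ := ((choices 𝒦 t Y).ncard : ℝ≥0∞)⁻¹
  have hle : ∏ Y ∈ 𝒴 ∩ G.powerset, w Y ≤ 1 := Finset.prod_le_one' fun Y _ =>
    ENNReal.inv_le_one.2 (Nat.one_le_cast.2 (Nat.one_le_iff_ne_zero.2 (ncard_choices_ne_zero ht)))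
  have hlower : IsLowerSet ((𝒴 ∪ G.powerset : Finset (Finset ℕ)) : Set (Finset ℕ)) := by
    simpa only [Finset.coe_union] using h𝒴.union hG
  calc extensionBound L G.card * ν (agreeCylinder 𝒦 𝒴 s)
      ≤ (∏ Y ∈ G.powerset, w Y) * ∏ Y ∈ 𝒴, w Y := by
        rw [hν hs h𝒴, ← hts.prod_choices_eq h𝒴]
        gcongr
        exact extensionBound_le_prod_choices G
    _ = (∏ Y ∈ 𝒴 ∪ G.powerset, w Y) * ∏ Y ∈ 𝒴 ∩ G.powerset, w Y := by
        rw [mul_comm, Finset.prod_union_inter]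
    _ ≤ ∏ Y ∈ 𝒴 ∪ G.powerset, w Y := mul_le_of_le_one_right' hle
    _ = ν (agreeCylinder 𝒦 (𝒴 ∪ G.powerset) t) := (hν ht hlower).symm
    _ ≤ ν (agreeCylinder 𝒦 𝒴 s ∩ {t | AgreeOn G.powerset t B}) := measure_mono fun t' ⟨ht', hag⟩ =>
        ⟨⟨ht', (hag.mono Finset.subset_union_left).trans hts⟩,
          (hag.mono Finset.subset_union_right).trans htB⟩

end FramewiseUniform

section ExtensionProperty

theorem agreeOn_smul_self {F : Finset ℕ} {σ : Equiv.Perm ℕ} (hσ : ∀ x ∈ F, σ x = x)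
    (s : Set (GroundAtom L)) : AgreeOn F.powerset (σ • s) s := by
  intro a ha
  have hfix : σ • a = a := by
    refine GroundAtom.ext rfl HEq.rfl (heq_of_eq (Function.Embedding.ext fun i => ?_))
    exact hσ _ (GroundAtom.supp_subset_iff.1 (Finset.mem_powerset.1 ha) i)
  rw [Set.mem_smul_set_iff_inv_smul_mem, inv_smul_eq_iff.2 hfix.symm]

theorem swap_apply_eq_self {α : Type*} [DecidableEq α] {F : Finset α} {p x : α} (hp : p ∉ F)
    (hx : x ∉ F) : ∀ z ∈ F, Equiv.swap p x z = z := fun _ hz =>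
  Equiv.swap_apply_of_ne_of_ne (ne_of_mem_of_not_mem hz hp) (ne_of_mem_of_not_mem hz hx)

theorem swap_smul_insert {α : Type*} [DecidableEq α] {F : Finset α} {p x : α} (hp : p ∉ F)
    (hx : x ∉ F) : Equiv.swap p x • insert p F = insert x F := by
  rw [Finset.smul_finset_insert, Equiv.Perm.smul_def, Equiv.swap_apply_left,
    Finset.smul_finset_def]
  exact congrArg _ ((Finset.image_congr (swap_apply_eq_self hp hx)).trans Finset.image_id)

theorem inter_preimage_restrictTo_singleton {𝒦 S : Set (Set (GroundAtom L))}
    {𝒴 : Finset (Finset ℕ)} {s : Set (GroundAtom L)} (hS : S ⊆ 𝒦)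
    (h : ∀ t ∈ 𝒦, AgreeOn 𝒴 t s → t ∈ S) :
    S ∩ restrictTo 𝒴 ⁻¹' {restrictTo 𝒴 s} = agreeCylinder 𝒦 𝒴 s :=
  Set.ext fun t => ⟨fun ⟨ht, hts⟩ => ⟨hS ht, restrictTo_eq_iff_agreeOn.1 hts⟩,
    fun ⟨ht, hts⟩ => ⟨h t ht hts, restrictTo_eq_iff_agreeOn.2 hts⟩⟩

/-- The one-point extension property: every member `B` of `𝒦` that induces the same structure as
`s` on `F` is copied on `F ∪ {p}` by `s`, with some point `x` in the role of `p`. -/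
def HasExtensionProperty (𝒦 : Set (Set (GroundAtom L))) (s : Set (GroundAtom L)) : Prop :=
  ∀ (F : Finset ℕ), ∀ p ∉ F, ∀ B ∈ 𝒦, AgreeOn F.powerset s B →
    ∃ x ∉ F, AgreeOn (insert x F).powerset s (Equiv.swap p x • B)

variable [∀ n, Finite (L.Relations n)] {𝒦 : Set (Set (GroundAtom L))}
  {ν : Measure (Set (GroundAtom L))} [IsFiniteMeasure ν]

theorem IsFramewiseUniform.measure_agreeCylinder_sdiff_iUnion_eq_zero
    (hν : IsFramewiseUniform 𝒦 ν) (h𝒦 : IsLocalFamily 𝒦) {F : Finset ℕ} {p : ℕ} (hp : p ∉ F)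
    {B : Set (GroundAtom L)} (hB : B ∈ 𝒦) {y : ℕ → ℕ} (hy : Function.Injective y)
    (hyF : ∀ j, y j ∉ F) :
    ν (agreeCylinder 𝒦 F.powerset B \
      ⋃ j, {t | AgreeOn (insert (y j) F).powerset t (Equiv.swap p (y j) • B)}) = 0 := by
  refine measure_sdiff_iUnion_eq_zero (extensionBound_ne_zero (L := L) (F.card + 1))
    h𝒦.measurableSet_agreeCylinder (fun j => measurableSet_setOf_agreeOn _ _) fun m => ?_
  -- Condition on the structure induced on `F` and the first `m` candidates.
  let X := F ∪ (Finset.range m).image y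
  refine mul_measure_le_measure_inter_of_fiber (finite_range_restrictTo X.powerset)
    (fun c => measurableSet_preimage_restrictTo X.powerset {c}) fun s ⟨⟨hs, hsB⟩, hsE⟩ => ?_
  have hFX : F.powerset ⊆ X.powerset := Finset.powerset_mono.2 Finset.subset_union_left
  have hyX (j) (hj : j < m) : (insert (y j) F).powerset ⊆ X.powerset := by
    refine Finset.powerset_mono.2 (Finset.insert_subset ?_ Finset.subset_union_left)
    exact Finset.mem_union_right _ (Finset.mem_image_of_mem y (Finset.mem_range.2 hj))
  have hXF : X.powerset ∩ (insert (y m) F).powerset ⊆ F.powerset := by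
    have hym : y m ∉ X := by simp [X, hyF m, hy.eq_iff]
    intro Y hY
    obtain ⟨hYX, hYF⟩ := Finset.mem_inter.1 hY
    rw [Finset.mem_powerset] at hYX hYF ⊢
    exact (Finset.subset_insert_iff_of_notMem fun h => hym (hYX h)).1 hYF
  have hdet (t) (ht : t ∈ 𝒦) (hts : AgreeOn X.powerset t s) : t ∈ agreeCylinder 𝒦 F.powerset B \
      ⋃ j < m, {t | AgreeOn (insert (y j) F).powerset t (Equiv.swap p (y j) • B)} := by
    refine ⟨⟨ht, (hts.mono hFX).trans hsB⟩, fun htE => hsE ?_⟩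
    obtain ⟨j, hj, htj⟩ := Set.mem_iUnion₂.1 htE
    exact Set.mem_iUnion₂.2 ⟨j, hj, (hts.mono (hyX j hj)).symm.trans htj⟩
  rw [inter_preimage_restrictTo_singleton (fun t ht => ht.1.1) hdet,
    ← Finset.card_insert_of_notMem (hyF m)]
  refine hν.extensionBound_mul_le h𝒦 (isLowerSet_powerset X) hs (h𝒦.smul_mem _ hB) ?_
  exact (hsB.trans (agreeOn_smul_self (swap_apply_eq_self hp (hyF m)) B).symm).mono hXF

theorem IsFramewiseUniform.ae_exists_agreeOn_swap_smul (hν : IsFramewiseUniform 𝒦 ν)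
    (h𝒦 : IsLocalFamily 𝒦) {F : Finset ℕ} {p : ℕ} (hp : p ∉ F) {B : Set (GroundAtom L)}
    (hB : B ∈ 𝒦) :
    ∀ᵐ s ∂ν, s ∈ 𝒦 → AgreeOn F.powerset s B →
      ∃ x ∉ F, AgreeOn (insert x F).powerset s (Equiv.swap p x • B) := by
  let y := F.finite_toSet.infinite_compl.natEmbedding
  have hnull := hν.measure_agreeCylinder_sdiff_iUnion_eq_zero h𝒦 hp hB
    (Subtype.val_injective.comp y.injective) fun j => (y j).2
  filter_upwards [measure_eq_zero_iff_ae_notMem.1 hnull] with s hs hs𝒦 hsB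
  obtain ⟨j, hj⟩ := Set.mem_iUnion.1 (not_not.1 fun h => hs ⟨⟨hs𝒦, hsB⟩, h⟩)
  exact ⟨y j, (y j).2, hj⟩

theorem IsFramewiseUniform.ae_hasExtensionProperty (hν : IsFramewiseUniform 𝒦 ν)
    (h𝒦 : IsLocalFamily 𝒦) : ∀ᵐ s ∂ν, s ∈ 𝒦 → HasExtensionProperty 𝒦 s := by
  have hae : ∀ᵐ s ∂ν, ∀ (F : Finset ℕ), ∀ p ∉ F,
      ∀ B ∈ 𝒦 ∩ Set.range (restrictTo (insert p F).powerset), s ∈ 𝒦 → AgreeOn F.powerset s B →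
        ∃ x ∉ F, AgreeOn (insert x F).powerset s (Equiv.swap p x • B) := by
    refine ae_all_iff.2 fun F => ae_all_iff.2 fun p => ae_all_iff.2 fun hp => ?_
    exact (ae_ball_iff ((finite_range_restrictTo _).inter_of_right 𝒦).countable).2
      fun B hB => hν.ae_exists_agreeOn_swap_smul h𝒦 hp hB.1
  filter_upwards [hae] with s hs hs𝒦 F p hp B hB hsB
  have hrB := agreeOn_restrictTo (insert p F).powerset B
  obtain ⟨x, hx, hagree⟩ := hs F p hp _
    ⟨h𝒦.restrictTo_mem (isLowerSet_powerset (insert p F)) hB, Set.mem_range_self B⟩ hs𝒦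
    (hsB.trans (hrB.symm.mono (Finset.powerset_mono.2 (Finset.subset_insert p F))))
  refine ⟨x, hx, hagree.trans ?_⟩
  simpa only [swap_smul_insert hp hx] using hrB.smul (Equiv.swap p x)

end ExtensionProperty

section FraisseLimit

theorem exists_perm_apply_eq {α ι : Type*} [Finite ι] (f g : ι ↪ α) :
    ∃ σ : Equiv.Perm α, ∀ i, σ (f i) = g i := by
  have := Equiv.Perm.isMultiplyPretransitive α (Nat.card ι)
  let e := (Finite.equivFin ι).symm
  obtain ⟨σ, hσ⟩ := MulAction.exists_smul_eq (Equiv.Perm α) (e.toEmbedding.trans f)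
    (e.toEmbedding.trans g)
  refine ⟨σ, fun i => ?_⟩
  simpa using DFunLike.congr_fun hσ (e.symm i)

variable {𝒦 : Set (Set (GroundAtom L))} {s s' : Set (GroundAtom L)}

theorem HasExtensionProperty.exists_agreeOn_smul_insert (hs : HasExtensionProperty 𝒦 s)
    (h𝒦 : IsLocalFamily 𝒦) (hs' : s' ∈ 𝒦) {σ : Equiv.Perm ℕ} {F : Finset ℕ}
    (h : AgreeOn (σ • F).powerset s (σ • s')) (p : ℕ) :
    ∃ τ : Equiv.Perm ℕ, (∀ z ∈ F, τ z = σ z) ∧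
      AgreeOn (τ • insert p F).powerset s (τ • s') := by
  by_cases hp : p ∈ F
  · exact ⟨σ, fun _ _ => rfl, by rwa [Finset.insert_eq_of_mem hp]⟩
  have hσp : σ p ∉ σ • F := by rwa [← Equiv.Perm.smul_def, Finset.smul_mem_smul_finset_iff]
  obtain ⟨x, hx, hagree⟩ := hs (σ • F) (σ p) hσp (σ • s') (h𝒦.smul_mem σ hs') h
  refine ⟨Equiv.swap (σ p) x * σ, fun z hz => ?_, ?_⟩
  · exact swap_apply_eq_self hσp hx _ (Finset.smul_mem_smul_finset hz)
  · rwa [mul_smul, mul_smul, Finset.smul_finset_insert, Equiv.Perm.smul_def σ p,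
      swap_smul_insert hσp hx]

theorem HasExtensionProperty.exists_agreeOn_smul [IsEmpty (L.Relations 0)]
    (hs : HasExtensionProperty 𝒦 s) (h𝒦 : IsLocalFamily 𝒦) (hs' : s' ∈ 𝒦) (F : Finset ℕ) :
    ∃ σ : Equiv.Perm ℕ, AgreeOn (σ • F).powerset s (σ • s') := by
  induction F using Finset.induction_on with
  | empty =>
    refine ⟨1, agreeOn_smul_powerset_iff.2 fun {n} R t ht => ?_⟩
    cases n with
    | zero => exact isEmptyElim R
    | succ n => exact absurd (ht 0) (Finset.notMem_empty _)
  | insert p F _ ih =>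
    obtain ⟨σ, hσ⟩ := ih
    obtain ⟨τ, -, hτ⟩ := hs.exists_agreeOn_smul_insert h𝒦 hs' hσ p
    exact ⟨τ, hτ⟩

variable [L.IsRelational]

theorem AgreeOn.exists_embedding {σ : Equiv.Perm ℕ} {X : Finset ℕ}
    (h : AgreeOn (σ • X).powerset s (σ • s')) {N : Type*} [L.Structure N]
    (e : @Embedding L N ℕ _ (ofAtoms s').str) (he : ∀ x, e.toFun x ∈ X) :
    ∃ g : @Embedding L N ℕ _ (ofAtoms s).str, ∀ x, g.toFun x = σ (e.toFun x) := by
  let := (ofAtoms s').str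
  refine ⟨@Embedding.mk L N ℕ _ (ofAtoms s).str (e.toEmbedding.trans σ.toEmbedding)
    (fun f _ => isEmptyElim f) fun R t => ?_, fun _ => rfl⟩
  exact (agreeOn_smul_powerset_iff.1 h R (e ∘ t) fun i => he (t i)).trans (e.map_rel R t)

/-- The inclusion of an induced finite substructure. -/
def InfStruc.restrictEmbedding (M : InfStruc L) (X : Finset ℕ) :
    @Embedding L {x // x ∈ (M.restrict X).carrier} ℕ (M.restrict X).str M.str :=
  let := M.str
  { toEmbedding := Function.Embedding.subtype _
    map_fun' := fun f _ => isEmptyElim f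
    map_rel' := fun _ t => ⟨fun h => ⟨h, fun i => (t i).2⟩, fun h => h.1⟩ }

theorem HasExtensionProperty.isUltrahomogeneous (hs : HasExtensionProperty 𝒦 s)
    (h𝒦 : IsLocalFamily 𝒦) (hs𝒦 : s ∈ 𝒦) : @IsUltrahomogeneous L ℕ (ofAtoms s).str := by
  let := (ofAtoms s).str
  rw [isUltrahomogeneous_iff_IsExtensionPair Structure.cg_of_countable,
    isExtensionPair_iff_exists_embedding_closure_singleton_sup]
  intro S hS f m
  have : Finite S := hS.finite
  let F := (S : Set ℕ).toFinite.toFinset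
  have hF (z : ℕ) : z ∈ F ↔ z ∈ S := by simp [F]
  obtain ⟨σ, hσ⟩ := exists_perm_apply_eq S.subtype.toEmbedding f.toEmbedding
  have hagree : AgreeOn (σ • F).powerset s (σ • s) := by
    refine agreeOn_smul_powerset_iff.2 fun R t ht => ?_
    have hσt : f ∘ (fun i => ⟨t i, (hF _).1 (ht i)⟩) = σ ∘ t :=
      funext fun i => (hσ ⟨t i, (hF _).1 (ht i)⟩).symm
    rw [← hσt]
    exact f.map_rel R _
  obtain ⟨τ, hτσ, hτ⟩ := hs.exists_agreeOn_smul_insert h𝒦 hs𝒦 hagree m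
  obtain ⟨g, hg⟩ := hτ.exists_embedding (Substructure.closure L {m} ⊔ S).subtype fun x => by
    have hx : (x : ℕ) ∈ Substructure.closure L ({m} ∪ S) := by
      simpa only [Substructure.closure_union, Substructure.closure_eq] using x.2
    have hmem : (x : ℕ) ∈ {m} ∪ (S : Set ℕ) :=
      (Substructure.mem_closure_iff_of_isRelational L _ _).1 hx
    exact Finset.mem_insert.2 (hmem.imp_right (hF _).2)
  refine ⟨g, Embedding.ext fun x => ?_⟩
  exact ((hσ x).symm.trans (hτσ x ((hF _).2 x.2)).symm).trans (hg ⟨x, _⟩).symm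

variable {Φ : L.Theory}

theorem age_subset_toBundled (hloc : ∀ φ ∈ Φ, IsLocalSentence φ) {M : InfStruc L}
    (hM : M ∈ KinfSet Φ) : @age L ℕ M.str ⊆ toBundled L (finModels Φ) := by
  let := M.str
  rintro N ⟨hFG, ⟨f⟩⟩
  have : Finite N := hFG.finite
  let X := (Set.finite_range f).toFinset
  let e : N ≃ {x // x ∈ X} := (Equiv.ofInjective f f.injective).trans
    (Equiv.subtypeEquivRight fun _ => (Set.finite_range f).mem_toFinset.symm)
  exact ⟨M.restrict X, restrict_mem_finModels hloc hM X,
    ⟨⟨e, fun f _ => isEmptyElim f, fun R t =>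
      ((M.restrictEmbedding X).map_rel R (e ∘ t)).symm.trans (f.map_rel R t)⟩⟩⟩

theorem HasExtensionProperty.toBundled_subset_age [IsEmpty (L.Relations 0)]
    (hs : HasExtensionProperty (modelDiagrams Φ) s) (hloc : ∀ φ ∈ Φ, IsLocalSentence φ)
    (hGI : GITheory L ⊆ Φ) : toBundled L (finModels Φ) ⊆ @age L ℕ (ofAtoms s).str := by
  let := (ofAtoms s).str
  rintro N ⟨A, hA, ⟨e⟩⟩
  obtain ⟨s', hs', hsA⟩ := (mem_finModels_iff hloc hGI).1 hA
  obtain ⟨σ, hσ⟩ := hs.exists_agreeOn_smul (isLocalFamily_modelDiagrams hloc) hs' A.carrier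
  obtain ⟨X, rfl⟩ : ∃ X, (ofAtoms s').restrict X = A := ⟨_, hsA⟩
  obtain ⟨g, -⟩ := hσ.exists_embedding ((ofAtoms s').restrictEmbedding X) Subtype.prop
  have : Finite N := .of_equiv _ e.toEquiv.symm
  exact ⟨Structure.FG.of_finite, ⟨g.comp e.toEmbedding⟩⟩

theorem HasExtensionProperty.isFraisseLimit [IsEmpty (L.Relations 0)]
    [Countable (Σ l, L.Functions l)] (hs : HasExtensionProperty (modelDiagrams Φ) s)
    (hloc : ∀ φ ∈ Φ, IsLocalSentence φ) (hGI : GITheory L ⊆ Φ) (hsΦ : s ∈ modelDiagrams Φ) :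
    @IsFraisseLimit L (toBundled L (finModels Φ)) ℕ (ofAtoms s).str _ _ :=
  let := (ofAtoms s).str
  { ultrahomogeneous := hs.isUltrahomogeneous (isLocalFamily_modelDiagrams hloc) hsΦ
    age := (age_subset_toBundled hloc hsΦ).antisymm (hs.toBundled_subset_age hloc hGI) }

end FraisseLimit

section Frames

theorem FinStruc.restrict_carrier (A : FinStruc L) : A.restrict A.carrier = A := by
  conv_rhs => rw [← A.restrict_mk_rel]
  simp only [FinStruc.restrict, InfStruc.restrict, Finset.inter_self]

theorem InfStruc.restrict_frame_eq_iff {M M' : InfStruc L} {X : Finset ℕ} {k : ℕ} :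
    (M.restrict X).frame k = (M'.restrict X).frame k ↔
      ∀ {n : ℕ} (R : L.Relations n) (t : Fin n → ℕ), n ≤ k → (∀ i, t i ∈ X) →
        (t ∈ M.rel R ↔ t ∈ M'.rel R) := by
  refine ⟨fun h n R t hn ht => ?_, fun h => ?_⟩
  · have hrel := congrArg (fun A : FinStruc L => t ∈ A.rel R) h
    simpa [FinStruc.frame, InfStruc.restrict, hn, ht] using hrel
  · simp only [FinStruc.frame, FinStruc.mk.injEq, InfStruc.restrict, true_and]
    funext n R
    split_ifs with hn
    · exact Set.ext fun t => and_congr_left (h R t hn)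
    · rfl

theorem finite_range_restrict_frame [∀ n, Finite (L.Relations n)] (X : Finset ℕ) (k : ℕ) :
    (Set.range fun M : InfStruc L => (M.restrict X).frame k).Finite := by
  let rels (M : InfStruc L) : Set (Σ n : Fin (k + 1), L.Relations n × (Fin n → X)) :=
    {p | (fun i => (p.2.2 i : ℕ)) ∈ M.rel p.2.1}
  have hfactor : Function.FactorsThrough (fun M : InfStruc L => (M.restrict X).frame k) rels := by
    refine fun M M' h => InfStruc.restrict_frame_eq_iff.2 fun {n} R t hn ht => ?_
    exact Set.ext_iff.1 h ⟨⟨n, Nat.lt_succ_of_le hn⟩, R, fun i => ⟨t i, ht i⟩⟩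
  have : Nonempty (FinStruc L) := ⟨(ofAtoms ∅).restrict ∅⟩
  obtain ⟨e, he⟩ := (Function.factorsThrough_iff _).1 hfactor
  rw [he, Set.range_comp]
  exact (Set.toFinite _).image e

theorem measurable_diagram [∀ n, Finite (L.Relations n)] :
    Measurable[frameEvents L] (InfStruc.diagram (L := L)) := by
  let := frameEvents L
  refine measurable_set_iff.2 fun a => measurableSet_setOfPred.1 ?_
  let f (M : InfStruc L) : FinStruc L := (M.restrict a.supp).frame a.arity
  have hunion : {M : InfStruc L | a ∈ M.diagram} = f ⁻¹' (f '' {M | a ∈ M.diagram}) := by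
    refine (Set.subset_preimage_image _ _).antisymm ?_
    rintro M ⟨M', hM', h⟩
    exact (InfStruc.restrict_frame_eq_iff.1 h a.symb a.tuple le_rfl a.tuple_mem_supp).1 hM'
  rw [hunion, ← Set.biUnion_preimage_singleton]
  refine ((finite_range_restrict_frame a.supp a.arity).subset
    (Set.image_subset_range f _)).measurableSet_biUnion ?_
  rintro _ ⟨M, -, rfl⟩
  exact MeasurableSpace.measurableSet_generateFrom ⟨M.restrict a.supp, a.arity, rfl⟩

/-- The supports of the atoms in the `k`-frame of a structure on `X`. -/
def frameSupports (X : Finset ℕ) (k : ℕ) : Finset (Finset ℕ) :=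
  {Y ∈ X.powerset | Y.card ≤ k}

theorem frameSupports_zero (X : Finset ℕ) : frameSupports X 0 = {∅} := by
  ext Y
  simp +contextual [frameSupports]

theorem frameSupports_succ (X : Finset ℕ) (k : ℕ) :
    frameSupports X (k + 1) = frameSupports X k ∪ X.powersetCard (k + 1) := by
  ext Y
  simp only [frameSupports, Finset.mem_filter, Finset.mem_union, Finset.mem_powersetCard,
    Finset.mem_powerset, ← and_or_left, Nat.le_succ_iff]

theorem disjoint_powersetCard_frameSupports (X : Finset ℕ) (k : ℕ) :
    Disjoint (X.powersetCard (k + 1)) (frameSupports X k) := by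
  refine Finset.disjoint_left.2 fun Y hY hY' => ?_
  have hcard := (Finset.mem_filter.1 hY').2
  rw [(Finset.mem_powersetCard.1 hY).2] at hcard
  exact Nat.not_succ_le_self k hcard

theorem frameSupports_card (X : Finset ℕ) : frameSupports X X.card = X.powerset :=
  Finset.filter_true_of_mem fun _ hY => Finset.card_le_card (Finset.mem_powerset.1 hY)

theorem isLowerSet_frameSupports (X : Finset ℕ) (k : ℕ) :
    IsLowerSet (frameSupports X k : Set (Finset ℕ)) := by
  intro Y Z hZY hY
  obtain ⟨hYX, hYk⟩ := Finset.mem_filter.1 hY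
  exact Finset.mem_filter.2 ⟨isLowerSet_powerset X hZY hYX, (Finset.card_le_card hZY).trans hYk⟩

theorem ssubsets_subset_frameSupports {X Y : Finset ℕ} {k : ℕ} (hY : Y ∈ X.powersetCard (k + 1)) :
    Y.ssubsets ⊆ frameSupports X k := by
  obtain ⟨hYX, hYk⟩ := Finset.mem_powersetCard.1 hY
  intro Z hZ
  have hlt := Finset.mem_ssubsets.1 hZ
  exact Finset.mem_filter.2 ⟨Finset.mem_powerset.2 (hlt.subset.trans hYX),
    Nat.lt_succ_iff.1 ((Finset.card_lt_card hlt).trans_eq hYk)⟩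

variable {X : Finset ℕ} {k : ℕ} {s s' : Set (GroundAtom L)}

theorem restrict_ofAtoms_frame_eq_iff_agreeOn :
    ((ofAtoms s).restrict X).frame k = ((ofAtoms s').restrict X).frame k ↔
      AgreeOn (frameSupports X k) s s' := by
  rw [InfStruc.restrict_frame_eq_iff]
  have hsupp (a : GroundAtom L) :
      a.supp ∈ frameSupports X k ↔ a.arity ≤ k ∧ ∀ i, a.tuple i ∈ X := by
    rw [frameSupports, Finset.mem_filter, Finset.mem_powerset, GroundAtom.card_supp,
      GroundAtom.supp_subset_iff, and_comm]
  refine ⟨fun h a ha => ?_, fun h n R t hn ht => ?_⟩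
  · rw [← diagram_ofAtoms s, ← diagram_ofAtoms s']
    exact h a.symb a.tuple ((hsupp a).1 ha).1 ((hsupp a).1 ha).2
  · exact exists_congr fun hinj => h ⟨n, R, ⟨t, hinj⟩⟩ ((hsupp _).2 ⟨hn, ht⟩)

variable [L.IsRelational] {Φ : L.Theory}

theorem Oinf_inter_KinfSet (hGI : GITheory L ⊆ Φ) :
    Oinf ((ofAtoms s).restrict X) k ∩ KinfSet Φ =
      InfStruc.diagram ⁻¹' agreeCylinder (modelDiagrams Φ) (frameSupports X k) s ∩ KinfSet Φ := by
  ext M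
  refine and_congr_left fun hM => ?_
  have hdiag := ofAtoms_diagram hGI hM
  refine (show _ ↔ _ from ?_).trans (and_iff_right (show ofAtoms M.diagram ∈ _ by rwa [hdiag])).symm
  rw [← restrict_ofAtoms_frame_eq_iff_agreeOn, hdiag]
  rfl

theorem KsetFr_restrict_ofAtoms (hloc : ∀ φ ∈ Φ, IsLocalSentence φ) (hGI : GITheory L ⊆ Φ)
    (l : ℕ) :
    KsetFr (finModels Φ) X l ((ofAtoms s).restrict X) k =
      (fun t => ((ofAtoms t).restrict X).frame l) ''
        agreeCylinder (modelDiagrams Φ) (frameSupports X k) s := by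
  ext F
  constructor
  · rintro ⟨B, hB, rfl, hBs, rfl⟩
    obtain ⟨t, ht, htB⟩ := (mem_finModels_iff hloc hGI).1 hB
    refine ⟨t, ⟨ht, restrict_ofAtoms_frame_eq_iff_agreeOn.1 ?_⟩, congrArg (FinStruc.frame · l) htB⟩
    rw [htB, ← hBs]
    exact (B.frame k).restrict_carrier.symm
  · rintro ⟨t, ⟨ht, hts⟩, rfl⟩
    refine ⟨_, restrict_mem_finModels hloc ht X, rfl, ?_, rfl⟩
    exact (FinStruc.restrict_carrier _).trans (restrict_ofAtoms_frame_eq_iff_agreeOn.2 hts)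

theorem Ncount_restrict_ofAtoms (hloc : ∀ φ ∈ Φ, IsLocalSentence φ) (hGI : GITheory L ⊆ Φ)
    (hs : s ∈ modelDiagrams Φ) :
    Ncount (finModels Φ) ((ofAtoms s).restrict X) k =
      ∏ Y ∈ X.powersetCard (k + 1), (choices (modelDiagrams Φ) s Y).ncard := by
  rw [← (isLocalFamily_modelDiagrams hloc).ncard_restrictTo_image_agreeCylinder
    (isLowerSet_frameSupports X k) hs (disjoint_powersetCard_frameSupports X k)
    fun _ => ssubsets_subset_frameSupports]
  refine (congrArg Set.ncard (KsetFr_restrict_ofAtoms hloc hGI (k + 1))).trans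
    (ncard_image_eq_ncard_image fun t ht t' ht' => ?_)
  rw [restrict_ofAtoms_frame_eq_iff_agreeOn, restrictTo_eq_iff_agreeOn, frameSupports_succ]
  exact ⟨fun h => h.mono Finset.subset_union_right, (ht.2.trans ht'.2.symm).union⟩

end Frames

section DiagramLaw

theorem isEmpty_relations_zero [∀ n, Finite (L.Relations n)] {𝒦 : Set (Set (GroundAtom L))}
    (h𝒦 : IsLocalFamily 𝒦) {ν : Measure (Set (GroundAtom L))} [IsProbabilityMeasure ν]
    (h : ∀ s ∈ 𝒦, ν (agreeCylinder 𝒦 {∅} s) = 1) : IsEmpty (L.Relations 0) := by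
  refine ⟨fun R => ?_⟩
  let a : GroundAtom L := ⟨0, R, Function.Embedding.ofIsEmpty⟩
  have hempty : ∅ ∈ 𝒦 := h𝒦.mem_of_agreeOn fun _ hb => absurd hb (Set.notMem_empty _)
  have hsingle : {a} ∈ 𝒦 := h𝒦.mem_of_agreeOn fun b hb hbne => by
    rw [Set.mem_singleton_iff.1 hb] at hbne
    exact absurd hbne Finset.not_nonempty_empty
  have hae (s) (hs : s ∈ 𝒦) : ∀ᵐ t ∂ν, t ∈ agreeCylinder 𝒦 {∅} s :=
    (mem_ae_iff_prob_eq_one h𝒦.measurableSet_agreeCylinder).2 (h s hs)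
  obtain ⟨t, ht₁, ht₂⟩ := ((hae _ hempty).and (hae _ hsingle)).exists
  have ha : a.supp ∈ ({∅} : Finset (Finset ℕ)) := Finset.mem_singleton_self _
  exact (ht₁.2 a ha).1 ((ht₂.2 a ha).2 rfl)

/-- The distribution of the diagram of a random structure on `ℕ`. -/
noncomputable def diagramLaw (μ : @Measure (InfStruc L) (frameEvents L)) :
    Measure (Set (GroundAtom L)) :=
  @Measure.map _ _ (frameEvents L) _ InfStruc.diagram μ

variable [∀ n, Finite (L.Relations n)] {μ : @Measure (InfStruc L) (frameEvents L)}

instance [IsProbabilityMeasure μ] : IsProbabilityMeasure (diagramLaw μ) :=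
  Measure.isProbabilityMeasure_map measurable_diagram.aemeasurable

variable [L.IsRelational] {Φ : L.Theory}

theorem measure_Oinf_inter_KinfSet [IsFiniteMeasure μ] (hloc : ∀ φ ∈ Φ, IsLocalSentence φ)
    (hGI : GITheory L ⊆ Φ) (hconc : μ (KinfSet Φ) = μ Set.univ) (X : Finset ℕ) (k : ℕ)
    (s : Set (GroundAtom L)) :
    μ (Oinf ((ofAtoms s).restrict X) k ∩ KinfSet Φ) =
      diagramLaw μ (agreeCylinder (modelDiagrams Φ) (frameSupports X k) s) := by
  let := frameEvents L
  have hcyl : MeasurableSet (agreeCylinder (modelDiagrams Φ) (frameSupports X k) s) :=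
    (isLocalFamily_modelDiagrams hloc).measurableSet_agreeCylinder
  rw [Oinf_inter_KinfSet hGI, diagramLaw, Measure.map_apply measurable_diagram hcyl,
    measure_inter_eq_of_measure_eq_univ hconc (measurable_diagram hcyl)]

theorem isFramewiseUniform_diagramLaw [IsEmpty (L.Relations 0)] [IsFiniteMeasure μ]
    (hloc : ∀ φ ∈ Φ, IsLocalSentence φ) (hGI : GITheory L ⊆ Φ)
    (hconc : μ (KinfSet Φ) = μ Set.univ)
    (h0 : ∀ A ∈ finModels Φ, μ (Oinf A 0 ∩ KinfSet Φ) = 1)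
    (hrec : ∀ A ∈ finModels Φ, ∀ k, μ (Oinf A (k + 1) ∩ KinfSet Φ) =
      μ (Oinf A k ∩ KinfSet Φ) / (Ncount (finModels Φ) A k : ℝ≥0∞)) :
    IsFramewiseUniform (modelDiagrams Φ) (diagramLaw μ) := by
  refine isFramewiseUniform_of_powerset (isLocalFamily_modelDiagrams hloc) fun s hs X => ?_
  let w (Y : Finset ℕ) : ℝ≥0∞ := ((choices (modelDiagrams Φ) s Y).ncard : ℝ≥0∞)⁻¹
  have hX : (ofAtoms s).restrict X ∈ finModels Φ := restrict_mem_finModels hloc hs X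
  suffices h : ∀ k, μ (Oinf ((ofAtoms s).restrict X) k ∩ KinfSet Φ) =
      ∏ Y ∈ frameSupports X k, w Y by
    rw [← frameSupports_card X, ← measure_Oinf_inter_KinfSet hloc hGI hconc, h]
  intro k
  induction k with
  | zero =>
    have hle : (choices (modelDiagrams Φ) s ∅).ncard ≤ 1 := by
      simpa using ncard_choices_le (𝒦 := modelDiagrams Φ) (s := s) (Y := ∅)
    have hone : (choices (modelDiagrams Φ) s ∅).ncard = 1 :=
      hle.antisymm (Nat.one_le_iff_ne_zero.2 (ncard_choices_ne_zero hs))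
    simp only [h0 _ hX, frameSupports_zero, Finset.prod_singleton, w, hone, Nat.cast_one, inv_one]
  | succ k ih =>
    rw [hrec _ hX, ih, Ncount_restrict_ofAtoms hloc hGI hs, frameSupports_succ,
      Finset.prod_union (disjoint_powersetCard_frameSupports X k).symm, div_eq_mul_inv,
      Nat.cast_prod, ENNReal.prod_inv_distrib]
    exact fun _ _ _ _ _ => .inl (Nat.cast_ne_zero.2 (ncard_choices_ne_zero hs))

end DiagramLaw

/-- Under the frame-wise uniform measure, almost every structure in `K^∞` is isomorphic to the
Fraïssé limit of `K`. -/
theorem statement_11 (L : FirstOrder.Language.{u, v}) [L.IsRelational]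
    [∀ n, Finite (L.Relations n)] [Countable (Σ l, L.Functions l)]
    (Φ : L.Theory) (hloc : ∀ φ ∈ Φ, IsLocalSentence φ) (hGI : GITheory L ⊆ Φ)
    (K : Set (FinStruc L)) (hK : K = { A : FinStruc L | ∀ φ ∈ Φ, A.Sat φ })
    (R : Type) [L.Structure R] [Countable R] (hR : IsFraisseLimit (toBundled L K) R)
    (μ : @MeasureTheory.Measure (InfStruc L) (frameEvents L))
    (hprob : MeasureTheory.IsProbabilityMeasure μ)
    (hconc : μ (KinfSet Φ) = 1)
    (h0 : ∀ A ∈ K, μ (Oinf A 0 ∩ KinfSet Φ) = 1)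
    (hrec : ∀ A ∈ K, ∀ k : ℕ,
      μ (Oinf A (k + 1) ∩ KinfSet Φ) =
        μ (Oinf A k ∩ KinfSet Φ) / (Ncount K A k : ENNReal)) :
    μ { M : InfStruc L | Nonempty (@FirstOrder.Language.Equiv L ℕ R M.str _) } = 1 := by
  let := frameEvents L
  obtain rfl : K = finModels Φ := hK
  have h𝒦 := isLocalFamily_modelDiagrams hloc
  have huniv : μ (KinfSet Φ) = μ Set.univ := hconc.trans measure_univ.symm
  have : IsEmpty (L.Relations 0) := by
    refine isEmpty_relations_zero h𝒦 (ν := diagramLaw μ) fun s hs => ?_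
    rw [← frameSupports_zero ∅, ← measure_Oinf_inter_KinfSet hloc hGI huniv]
    exact h0 _ (restrict_mem_finModels hloc hs ∅)
  have hunif : IsFramewiseUniform (modelDiagrams Φ) (diagramLaw μ) :=
    isFramewiseUniform_diagramLaw hloc hGI huniv h0 hrec
  have hext : ∀ᵐ M ∂μ, M.diagram ∈ modelDiagrams Φ →
      HasExtensionProperty (modelDiagrams Φ) M.diagram :=
    ae_of_ae_map measurable_diagram.aemeasurable (hunif.ae_hasExtensionProperty h𝒦)
  refine prob_le_one.antisymm (hconc.symm.trans_le (measure_mono_ae ?_))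
  filter_upwards [hext] with M hM hMΦ
  have hdiagram : ofAtoms M.diagram = M := ofAtoms_diagram hGI hMΦ
  have hmem : M.diagram ∈ modelDiagrams Φ := by rwa [modelDiagrams, Set.mem_ofPred, hdiagram]
  have hFraisse := (hM hmem).isFraisseLimit hloc hGI hmem
  rw [hdiagram] at hFraisse
  exact @IsFraisseLimit.nonempty_equiv L _ ℕ M.str R _ _ _ _ hFraisse hR
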